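/- arXiv:1707.03639 — 2 statements merged into one kernel-verified Lean document; each statement's English description precedes it below -/
import Mathlib

section
/- Let G ≅ C_m ⋉_φ C_m. Then every sequence S over G of length |S| = 3m − 2 contains a nonempty product-one subsequence T whose length is divisible by m. -/
/-- A sequence (multiset) over `G` is product-one if its terms can be ordered so
that their product equals `1`. -/
def IsProductOne {G : Type*} [Group G] (S : Multiset G) : Prop :=
  ∃ l : List G, (l : Multiset G) = S ∧ l.prod = 1

/-!
The induction removes the largest prime `p` from `m = p * q`. Conjugation by a generator `y` of the
complement acts on `⟨x⟩` with order dividing both `p * q` and `φ (p * q)`, hence dividing `q` by the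
choice of `p`. So `y ^ q` is central, the image of `C_p ^ 2` spanned by `x ^ q` and `y ^ q` is a
normal subgroup `K`, and `G ⧸ K` is a group of the same kind for `q`.

First, `4 * m - 3` terms always contain a product-one subsequence of length exactly `m`: by
induction one extracts `4 * p - 3` disjoint blocks of length `q` whose products lie in `K`, and
Kemnitz' theorem for `C_p ^ 2` selects `p` of them. For the main theorem, `3 * p - 3` such blocks
still leave `3 * q - 2` terms, which by induction contain one more block, of length divisible by
`q`. Recording `length / q` next to the product makes each of these `3 * p - 2` blocks an element of
`C_p ^ 3`, whose Davenport constant is `3 * p - 2`.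

Kemnitz' theorem is proved by Reiher's counting argument. His congruences, and the Davenport
constant, come from polynomials of low degree on the cube `{0, 1} ^ n`: the alternating sum over the
cube of a polynomial of degree less than `n` vanishes. A congruence for weighted counts replaces
Reiher's partition argument.
-/

open Finset

section SetFunctions

variable {R ι : Type*} [CommRing R] [DecidableEq ι]

variable (R) in
/-- The monomial `∏ i ∈ A, Xᵢ` as a function on the finsets `I` of `ι`, a finset standing for its
indicator vector. -/
def setMonomial (A : Finset ι) : Finset ι → R := fun I => if A ⊆ I then 1 else 0

variable (R ι) in
/-- The functions on the finsets of `ι` given by polynomials of degree at most `d` in the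
coordinates of the indicator vector. As these coordinates are idempotent, squarefree monomials
suffice. -/
def setDegreeLE (d : ℕ) : Submodule R (Finset ι → R) :=
  Submodule.span R (setMonomial R '' {A | #A ≤ d})

lemma setMonomial_mem_setDegreeLE {A : Finset ι} {d : ℕ} (hA : #A ≤ d) :
    setMonomial R A ∈ setDegreeLE R ι d :=
  Submodule.subset_span ⟨A, hA, rfl⟩

lemma setMonomial_mul (A B : Finset ι) :
    setMonomial R A * setMonomial R B = setMonomial R (A ∪ B) := by
  funext I
  simp only [setMonomial, Pi.mul_apply, union_subset_iff, ite_zero_mul_ite_zero, mul_one]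

lemma setDegreeLE_mono : Monotone (setDegreeLE R ι) := fun _ _ h =>
  Submodule.span_mono (Set.image_mono fun _ hA => le_trans hA h)

lemma mul_mem_setDegreeLE {d e : ℕ} {f g : Finset ι → R} (hf : f ∈ setDegreeLE R ι d)
    (hg : g ∈ setDegreeLE R ι e) : f * g ∈ setDegreeLE R ι (d + e) := by
  have hfg := Submodule.mul_mem_mul hf hg
  rw [setDegreeLE, setDegreeLE, Submodule.span_mul_span] at hfg
  refine Submodule.span_le.2 ?_ hfg
  rintro _ ⟨_, ⟨A, hA, rfl⟩, _, ⟨B, hB, rfl⟩, rfl⟩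
  simp only [setMonomial_mul]
  exact setMonomial_mem_setDegreeLE ((card_union_le A B).trans (add_le_add hA hB))

instance : SetLike.GradedMonoid (setDegreeLE R ι) where
  one_mem := by
    have h : (1 : Finset ι → R) = setMonomial R ∅ := by funext I; simp [setMonomial]
    exact h ▸ setMonomial_mem_setDegreeLE le_rfl
  mul_mem _ _ _ _ := mul_mem_setDegreeLE

lemma const_mem_setDegreeLE (c : R) (d : ℕ) : (fun _ => c) ∈ setDegreeLE R ι d := by
  have h : (fun _ => c : Finset ι → R) = c • 1 := by funext I; simp
  exact h ▸ Submodule.smul_mem _ c (setDegreeLE_mono d.zero_le SetLike.GradedOne.one_mem)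

lemma sum_mem_setDegreeLE [Finite ι] (a : ι → R) :
    (fun I => ∑ i ∈ I, a i) ∈ setDegreeLE R ι 1 := by
  have := Fintype.ofFinite ι
  have h : (fun I => ∑ i ∈ I, a i) = ∑ i, a i • setMonomial R {i} := by
    funext I
    simp [setMonomial]
  exact h ▸ Submodule.sum_mem _ fun i _ =>
    Submodule.smul_mem _ _ (setMonomial_mem_setDegreeLE (card_singleton i).le)

lemma choose_card_mem_setDegreeLE [Finite ι] (j : ℕ) :
    (fun I => ((#I).choose j : R)) ∈ setDegreeLE R ι j := by
  have := Fintype.ofFinite ι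
  have h : (fun I => ((#I).choose j : R)) =
      ∑ A ∈ powersetCard j (univ : Finset ι), setMonomial R A := by
    funext I
    simp only [setMonomial, Finset.sum_apply, sum_boole, ← card_powersetCard]
    congr 2
    ext A
    simp [mem_powersetCard, and_comm]
  exact h ▸ Submodule.sum_mem _ fun A hA =>
    setMonomial_mem_setDegreeLE (mem_powersetCard.1 hA).2.le

lemma card_mem_setDegreeLE [Finite ι] : (fun I => (#I : R)) ∈ setDegreeLE R ι 1 := by
  simpa using choose_card_mem_setDegreeLE (R := R) (ι := ι) 1

lemma sum_powerset_neg_one_pow_card_mul_setMonomial {A X : Finset ι} (hAX : #A < #X) :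
    ∑ I ∈ X.powerset, (-1) ^ #I * setMonomial R A I = 0 := by
  obtain ⟨x, hxX, hxA⟩ := exists_mem_notMem_of_card_lt_card hAX
  rw [← insert_erase hxX, sum_powerset_insert (notMem_erase x X), ← sum_add_distrib]
  refine sum_eq_zero fun I hI => ?_
  have hxI : x ∉ I := fun h => notMem_erase x X (mem_powerset.1 hI h)
  simp only [setMonomial, card_insert_of_notMem hxI, subset_insert_iff_of_notMem hxA]
  ring

/-- The top-degree coefficient of a polynomial of degree below `#X` vanishes on the cube `2 ^ X`. -/
lemma sum_powerset_neg_one_pow_card_mul {d : ℕ} {f : Finset ι → R} (hf : f ∈ setDegreeLE R ι d)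
    {X : Finset ι} (hX : d < #X) : ∑ I ∈ X.powerset, (-1) ^ #I * f I = 0 := by
  induction hf using Submodule.span_induction with
  | mem f h =>
    obtain ⟨A, hA, rfl⟩ := h
    exact sum_powerset_neg_one_pow_card_mul_setMonomial (lt_of_le_of_lt hA hX)
  | zero => simp
  | add f g _ _ hf hg => simp [mul_add, sum_add_distrib, hf, hg]
  | smul c f _ hf => simp [mul_left_comm _ c, ← mul_sum, hf]

end SetFunctions

section ZeroSums

variable {p : ℕ} [Fact p.Prime] {ι κ : Type*} [Fintype κ]

lemma ite_eq_zero_mem_setDegreeLE [DecidableEq ι] {f : Finset ι → ZMod p}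
    (hf : f ∈ setDegreeLE (ZMod p) ι 1) :
    (fun I => if f I = 0 then 1 else 0) ∈ setDegreeLE (ZMod p) ι (p - 1) := by
  have h : (fun I => if f I = 0 then 1 else 0) = 1 - f ^ (p - 1) := by
    funext I
    by_cases hI : f I = 0 <;> simp [ZMod.pow_card_sub_one, hI]
  have hpow := SetLike.pow_mem_graded (A := setDegreeLE (ZMod p) ι) (p - 1) hf
  rw [smul_eq_mul, mul_one] at hpow
  exact h ▸ Submodule.sub_mem _ (const_mem_setDegreeLE 1 _) hpow

lemma ite_sum_eq_zero_mem_setDegreeLE [DecidableEq ι] [Finite ι] (v : ι → κ → ZMod p) :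
    (fun I => if ∑ i ∈ I, v i = 0 then 1 else 0) ∈
      setDegreeLE (ZMod p) ι (Fintype.card κ * (p - 1)) := by
  have h : (fun I => if ∑ i ∈ I, v i = 0 then (1 : ZMod p) else 0) =
      ∏ k, fun I => if ∑ i ∈ I, v i k = 0 then 1 else 0 := by
    funext I
    simp [Finset.prod_apply, prod_boole, funext_iff]
  have hprod := SetLike.prod_mem_graded (setDegreeLE (ZMod p) ι) (fun _ : κ => p - 1) _
    fun k (_ : k ∈ univ) => ite_eq_zero_mem_setDegreeLE (sum_mem_setDegreeLE fun i => v i k)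
  rw [sum_const, smul_eq_mul, card_univ] at hprod
  exact h ▸ hprod

theorem exists_nonempty_sum_eq_zero [Fintype ι] (v : ι → κ → ZMod p)
    (h : Fintype.card κ * (p - 1) < Fintype.card ι) :
    ∃ I : Finset ι, I.Nonempty ∧ ∑ i ∈ I, v i = 0 := by
  classical
  by_contra! hv
  have hsum := sum_powerset_neg_one_pow_card_mul (ite_sum_eq_zero_mem_setDegreeLE v)
    (h.trans_eq card_univ.symm)
  rw [sum_eq_single ∅ (fun I _ hI => by simp [hv I (nonempty_iff_ne_empty.2 hI)]) (by simp)]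
    at hsum
  simp at hsum

end ZeroSums

section ZeroSumSubsets

variable {ι V : Type*} [DecidableEq V]

/-- The zero-sum subsequences of length `n` of the sequence `(v i)` for `i ∈ X`, as index sets.
Reiher writes `(n | X)` for their number. -/
def zeroSumSubsets [AddCommMonoid V] (v : ι → V) (X : Finset ι) (n : ℕ) : Finset (Finset ι) :=
  {I ∈ X.powersetCard n | ∑ i ∈ I, v i = 0}

lemma mem_zeroSumSubsets [AddCommMonoid V] {v : ι → V} {X I : Finset ι} {n : ℕ} :
    I ∈ zeroSumSubsets v X n ↔ I ⊆ X ∧ #I = n ∧ ∑ i ∈ I, v i = 0 := by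
  simp [zeroSumSubsets, mem_powersetCard, and_assoc]

lemma zeroSumSubsets_zero [AddCommMonoid V] (v : ι → V) (X : Finset ι) :
    zeroSumSubsets v X 0 = {∅} := by
  simp [zeroSumSubsets, filter_singleton]

lemma zeroSumSubsets_eq_empty_of_card_lt [AddCommMonoid V] (v : ι → V) {X : Finset ι} {n : ℕ}
    (h : #X < n) : zeroSumSubsets v X n = ∅ := by
  simp [zeroSumSubsets, powersetCard_eq_empty.2 h]

lemma zeroSumSubsets_subset [AddCommMonoid V] (v : ι → V) {X Y : Finset ι} (h : X ⊆ Y) (n : ℕ) :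
    zeroSumSubsets v X n ⊆ zeroSumSubsets v Y n :=
  filter_subset_filter _ (powersetCard_mono h)

variable [DecidableEq ι]

lemma union_mem_zeroSumSubsets [AddCommMonoid V] {v : ι → V} {X A C : Finset ι} {s t : ℕ}
    (hA : A ∈ zeroSumSubsets v X s) (hC : C ∈ zeroSumSubsets v (X \ A) t) :
    A ∪ C ∈ zeroSumSubsets v X (s + t) := by
  rw [mem_zeroSumSubsets] at *
  have hdisj : Disjoint A C := (disjoint_of_subset_left hC.1 sdiff_disjoint).symm
  exact ⟨union_subset hA.1 (hC.1.trans sdiff_subset),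
    by rw [card_union_of_disjoint hdisj, hA.2.1, hC.2.1],
    by rw [sum_union hdisj, hA.2.2, hC.2.2, add_zero]⟩

lemma sdiff_mem_zeroSumSubsets [AddCommGroup V] {v : ι → V} {X B C : Finset ι} {s t : ℕ}
    (hB : B ∈ zeroSumSubsets v X (s + t)) (hC : C ∈ zeroSumSubsets v B t) :
    B \ C ∈ zeroSumSubsets v X s := by
  rw [mem_zeroSumSubsets] at *
  exact ⟨sdiff_subset.trans hB.1,
    by rw [card_sdiff_of_subset hC.1, hB.2.1, hC.2.1, Nat.add_sub_cancel],
    by rw [sum_sdiff_eq_sub hC.1, hB.2.2, hC.2.2, sub_zero]⟩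

/-- Both sides count the pairs of disjoint zero-sum subsets of sizes `s` and `t`. -/
lemma sum_card_zeroSumSubsets_sdiff [AddCommGroup V] (v : ι → V) (X : Finset ι) (s t : ℕ) :
    ∑ A ∈ zeroSumSubsets v X s, #(zeroSumSubsets v (X \ A) t) =
      ∑ B ∈ zeroSumSubsets v X (s + t), #(zeroSumSubsets v B t) := by
  rw [← card_sigma, ← card_sigma]
  refine card_bij' (fun x _ => ⟨x.1 ∪ x.2, x.2⟩) (fun x _ => ⟨x.1 \ x.2, x.2⟩) ?_ ?_ ?_ ?_
  · rintro ⟨A, C⟩ h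
    rw [mem_sigma] at h ⊢
    refine ⟨union_mem_zeroSumSubsets h.1 h.2, ?_⟩
    exact mem_zeroSumSubsets.2 ⟨subset_union_right, (mem_zeroSumSubsets.1 h.2).2⟩
  · rintro ⟨B, C⟩ h
    rw [mem_sigma] at h ⊢
    have hCX := (mem_zeroSumSubsets.1 h.2).1.trans (mem_zeroSumSubsets.1 h.1).1
    refine ⟨sdiff_mem_zeroSumSubsets h.1 h.2, mem_zeroSumSubsets.2 ⟨?_, ?_⟩⟩
    · exact subset_sdiff.2 ⟨hCX, disjoint_sdiff⟩
    · exact (mem_zeroSumSubsets.1 h.2).2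
  · rintro ⟨A, C⟩ h
    have hC := (mem_zeroSumSubsets.1 (mem_sigma.1 h).2).1
    simp [union_sdiff_cancel_right (disjoint_of_subset_left hC sdiff_disjoint).symm]
  · rintro ⟨B, C⟩ h
    simp [sdiff_union_of_subset (mem_zeroSumSubsets.1 (mem_sigma.1 h).2).1]

end ZeroSumSubsets

section Kemnitz

variable {p : ℕ} [Fact p.Prime]

lemma sum_range_mul_of_residue {M : Type*} [AddCommMonoid M] {r : ℕ} (hr : r < p) (K : ℕ)
    {f : ℕ → M} (hf : ∀ n : ℕ, (n : ZMod p) ≠ r → f n = 0) :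
    ∑ n ∈ range (K * p), f n = ∑ k ∈ range K, f (k * p + r) := by
  have hp : 0 < p := (Fact.out : p.Prime).pos
  refine (sum_of_injOn (fun k => k * p + r) ?_ ?_ ?_ fun _ _ => rfl).symm
  · intro k _ l _ hkl
    exact Nat.eq_of_mul_eq_mul_right hp (Nat.add_right_cancel hkl)
  · intro k hk
    simp only [coe_range, Set.mem_Iio] at hk ⊢
    nlinarith
  · intro n hn hnr
    refine hf n fun h => hnr ⟨n / p, ?_, ?_⟩
    · simpa using Nat.div_lt_of_lt_mul (by simpa [mul_comm] using hn)
    · rw [ZMod.natCast_eq_natCast_iff', Nat.mod_eq_of_lt hr] at h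
      simp only [← h, Nat.div_add_mod']

lemma natCast_choose_mul_add {r : ℕ} (hr : r < p) (k : ℕ) :
    ((k * p + r).choose p : ZMod p) = k := by
  have hp : 0 < p := (Fact.out : p.Prime).pos
  have h := Choose.choose_modEq_choose_mod_mul_choose_div_nat (n := k * p + r) (k := p) (p := p)
  rw [Nat.mod_self, Nat.div_self hp, Nat.choose_zero_right, one_mul, Nat.choose_one_right,
    mul_comm k, Nat.mul_add_div hp, Nat.div_eq_of_lt hr, add_zero, mul_comm] at h
  exact (ZMod.natCast_eq_natCast_iff _ _ _).2 h

lemma sum_ite_natCast_eq_mul_neg_one_pow (hp : Odd p) {r : ℕ} (hr : r < p) (hr' : Even r) (K : ℕ)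
    (f : ℕ → ZMod p) :
    ∑ n ∈ range (K * p), (-1) ^ n * ((if (n : ZMod p) = r then 1 else 0) * f n) =
      ∑ k ∈ range K, (-1) ^ k * f (k * p + r) := by
  rw [sum_range_mul_of_residue hr K fun n hn => by simp [hn]]
  refine sum_congr rfl fun k _ => ?_
  simp [pow_add, hr'.neg_one_pow, mul_comm k p, pow_mul, hp.neg_one_pow]

variable {ι κ : Type*} [Finite ι] [Fintype κ]

lemma ite_card_eq_mem_setDegreeLE [DecidableEq ι] (r : ZMod p) :
    (fun I : Finset ι => if (#I : ZMod p) = r then 1 else 0) ∈ setDegreeLE (ZMod p) ι (p - 1) := by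
  simpa only [Pi.sub_apply, sub_eq_zero] using ite_eq_zero_mem_setDegreeLE
    (Submodule.sub_mem (setDegreeLE (ZMod p) ι 1) card_mem_setDegreeLE (const_mem_setDegreeLE r 1))

/-- The difference is `(n + 1) ^ (p - 1) - n ^ (p - 1)` at `n = #I`, whose leading terms cancel. -/
lemma ite_card_sub_ite_card_mem_setDegreeLE [DecidableEq ι] :
    (fun I : Finset ι => (if (#I : ZMod p) = 0 then 1 else 0) -
      if (#I : ZMod p) = -1 then 1 else 0) ∈ setDegreeLE (ZMod p) ι (p - 2) := by
  have h : (fun I : Finset ι => (if (#I : ZMod p) = 0 then (1 : ZMod p) else 0) -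
        if (#I : ZMod p) = -1 then 1 else 0) =
      ∑ k ∈ range (p - 1), ((p - 1).choose k : ZMod p) • (fun I => (#I : ZMod p)) ^ k := by
    funext I
    have hpow (n : ZMod p) : (if n = 0 then (1 : ZMod p) else 0) = 1 - n ^ (p - 1) := by
      by_cases hn : n = 0 <;> simp [ZMod.pow_card_sub_one, hn]
    simp only [← add_eq_zero_iff_eq_neg, hpow, add_pow, sum_range_succ]
    simp [mul_comm]
  refine h ▸ Submodule.sum_mem _ fun k hk => Submodule.smul_mem _ _ ?_
  refine setDegreeLE_mono ?_ (SetLike.pow_mem_graded k card_mem_setDegreeLE)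
  have := mem_range.1 hk
  simp only [smul_eq_mul, mul_one]
  omega

lemma sum_range_mul_card_zeroSumSubsets [DecidableEq ι] (v : ι → κ → ZMod p) {X : Finset ι}
    {H : ℕ → ZMod p} {d N : ℕ} (hH : (fun I => H #I) ∈ setDegreeLE (ZMod p) ι d)
    (hX : Fintype.card κ * (p - 1) + d < #X) (hN : #X < N) :
    ∑ n ∈ range N, (-1) ^ n * (H n * #(zeroSumSubsets v X n)) = 0 := by
  have hcube := sum_powerset_neg_one_pow_card_mul
    (mul_mem_setDegreeLE (ite_sum_eq_zero_mem_setDegreeLE v) hH) hX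
  rw [sum_powerset] at hcube
  rw [← hcube]
  symm
  apply sum_subset_zero_on_sdiff (range_mono hN)
  · intro n hn
    have hXn : #X < n := by simpa [Nat.add_one_le_iff] using (mem_sdiff.1 hn).2
    simp [zeroSumSubsets_eq_empty_of_card_lt v hXn]
  · intro n _
    rw [zeroSumSubsets, ← sum_boole, mul_sum, mul_sum]
    refine sum_congr rfl fun I hI => ?_
    simp [(mem_powersetCard.1 hI).2]

lemma sum_neg_one_pow_mul_card_zeroSumSubsets (hp : Odd p) (v : ι → κ → ZMod p) {X : Finset ι}
    {r K : ℕ} (hr : r < p) (hr' : Even r) (hX : (Fintype.card κ + 1) * (p - 1) < #X)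
    (hK : #X < K * p) :
    ∑ k ∈ range K, (-1) ^ k * (#(zeroSumSubsets v X (k * p + r)) : ZMod p) = 0 := by
  classical
  rw [← sum_ite_natCast_eq_mul_neg_one_pow hp hr hr' K fun n => #(zeroSumSubsets v X n)]
  exact sum_range_mul_card_zeroSumSubsets v (ite_card_eq_mem_setDegreeLE (r : ZMod p))
    (by rwa [← add_one_mul]) hK

lemma sum_neg_one_pow_mul_mul_card_zeroSumSubsets (hp : Odd p) (v : ι → κ → ZMod p)
    {X : Finset ι} {K : ℕ} (hX : (Fintype.card κ + 2) * (p - 1) < #X) (hK : #X < K * p) :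
    ∑ k ∈ range K, (-1) ^ k * (k * ((#(zeroSumSubsets v X (k * p)) : ZMod p) -
      #(zeroSumSubsets v X (k * p + (p - 1))))) = 0 := by
  classical
  have hp2 : 2 ≤ p := (Fact.out : p.Prime).two_le
  let f (n : ℕ) : ZMod p := n.choose p * #(zeroSumSubsets v X n)
  have hf {r : ℕ} (hr : r < p) (k : ℕ) :
      f (k * p + r) = k * #(zeroSumSubsets v X (k * p + r)) := by
    simp only [f, natCast_choose_mul_add hr]
  have h0 := sum_ite_natCast_eq_mul_neg_one_pow hp (r := 0) (by omega) Even.zero K f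
  have h1 := sum_ite_natCast_eq_mul_neg_one_pow hp (r := p - 1) (by omega)
    (Nat.Odd.sub_odd hp odd_one) K f
  have hdeg : Fintype.card κ * (p - 1) + (p - 2 + p) = (Fintype.card κ + 2) * (p - 1) := by
    rw [add_mul]
    omega
  have h := sum_range_mul_card_zeroSumSubsets v (N := K * p)
    (H := fun n => ((if (n : ZMod p) = 0 then 1 else 0) - if (n : ZMod p) = -1 then 1 else 0) *
      n.choose p) (mul_mem_setDegreeLE ite_card_sub_ite_card_mem_setDegreeLE
        (choose_card_mem_setDegreeLE p)) (hdeg ▸ hX) hK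
  have hcast : ((p - 1 : ℕ) : ZMod p) = -1 := by
    rw [Nat.cast_pred (by omega), CharP.cast_eq_zero, zero_sub]
  simp only [hcast, Nat.cast_zero, add_zero] at h0 h1
  have hf0 (k : ℕ) : f (k * p) = k * #(zeroSumSubsets v X (k * p)) := hf (r := 0) (by omega) k
  have hf1 := hf (r := p - 1) (by omega)
  simp only [mul_sub, sum_sub_distrib, ← hf0, ← hf1, ← h0, ← h1]
  rw [← sum_sub_distrib]
  refine Eq.trans (sum_congr rfl fun n _ => ?_) h
  ring

lemma card_zeroSumSubsets_two_mul_eq_neg_one (hp : Odd p) (v : ι → Fin 2 → ZMod p) {X : Finset ι}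
    (hX : 3 * p - 2 ≤ #X) (hX' : #X < 3 * p) (h : zeroSumSubsets v X p = ∅) :
    (#(zeroSumSubsets v X (2 * p)) : ZMod p) = -1 := by
  have hp2 : 2 ≤ p := (Fact.out : p.Prime).two_le
  have hsum := sum_neg_one_pow_mul_card_zeroSumSubsets hp v (X := X) (r := 0) (K := 3) (by omega)
    Even.zero (by rw [Fintype.card_fin]; omega) hX'
  simp only [add_zero, sum_range_succ, range_one, sum_singleton, pow_zero, zero_mul,
    zeroSumSubsets_zero, card_singleton, Nat.cast_one, mul_one, pow_one, one_mul, h, card_empty,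
    Nat.cast_zero, mul_zero, even_two, Even.neg_pow, one_pow] at hsum
  exact (neg_eq_of_add_eq_zero_right hsum).symm

lemma zeroSumSubsets_three_mul_eq_empty (hp : Odd p) (v : ι → Fin 2 → ZMod p) {X : Finset ι}
    (h : zeroSumSubsets v X p = ∅) : zeroSumSubsets v X (3 * p) = ∅ := by
  classical
  have hp2 : 2 ≤ p := (Fact.out : p.Prime).two_le
  by_contra! ⟨I, hI⟩
  obtain ⟨hIX, hIcard, -⟩ := mem_zeroSumSubsets.1 hI
  obtain ⟨i, hi⟩ : I.Nonempty := card_pos.1 (by omega)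
  have hcard := card_erase_of_mem hi
  have hempty : zeroSumSubsets v (I.erase i) p = ∅ :=
    subset_empty.1 (h ▸ zeroSumSubsets_subset v ((erase_subset i I).trans hIX) p)
  have htwo := card_zeroSumSubsets_two_mul_eq_neg_one hp v (by omega) (by omega) hempty
  obtain ⟨C, hC⟩ : (zeroSumSubsets v (I.erase i) (2 * p)).Nonempty := by
    by_contra! hC
    simp [hC] at htwo
  have hC' := zeroSumSubsets_subset v (erase_subset i I) _ hC
  have hIC : I \ C ∈ zeroSumSubsets v X p :=
    sdiff_mem_zeroSumSubsets (by rwa [show p + 2 * p = 3 * p by omega]) hC'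
  simp [h] at hIC

lemma card_zeroSumSubsets_pred_eq (hp : Odd p) (v : ι → Fin 2 → ZMod p) {X : Finset ι}
    (hX : #X = 4 * p - 3) (h : zeroSumSubsets v X p = ∅) :
    (#(zeroSumSubsets v X (p - 1)) : ZMod p) = #(zeroSumSubsets v X (2 * p + (p - 1))) := by
  classical
  have hp2 : 2 ≤ p := (Fact.out : p.Prime).two_le
  have htwo {Y : Finset ι} (hYX : Y ⊆ X) (hY : 3 * p - 2 ≤ #Y) (hY' : #Y < 3 * p) :
      (#(zeroSumSubsets v Y (2 * p)) : ZMod p) = -1 :=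
    card_zeroSumSubsets_two_mul_eq_neg_one hp v hY hY'
      (subset_empty.1 (h ▸ zeroSumSubsets_subset v hYX p))
  have hpairs := congrArg (Nat.cast (R := ZMod p))
    (sum_card_zeroSumSubsets_sdiff v X (p - 1) (2 * p))
  have hleft (A) (hA : A ∈ zeroSumSubsets v X (p - 1)) :
      (#(zeroSumSubsets v (X \ A) (2 * p)) : ZMod p) = -1 := by
    obtain ⟨hAX, hA, -⟩ := mem_zeroSumSubsets.1 hA
    have hcard := card_sdiff_of_subset hAX
    exact htwo sdiff_subset (by omega) (by omega)
  have hright (B) (hB : B ∈ zeroSumSubsets v X (p - 1 + 2 * p)) :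
      (#(zeroSumSubsets v B (2 * p)) : ZMod p) = -1 := by
    obtain ⟨hBX, hB, -⟩ := mem_zeroSumSubsets.1 hB
    exact htwo hBX (by omega) (by omega)
  rw [Nat.cast_sum, Nat.cast_sum, sum_congr rfl hleft, sum_congr rfl hright] at hpairs
  simpa [add_comm] using hpairs

lemma zeroSumSubsets_nonempty_of_odd (hp : Odd p) (v : ι → Fin 2 → ZMod p) {X : Finset ι}
    (hX : #X = 4 * p - 3) : (zeroSumSubsets v X p).Nonempty := by
  by_contra! h
  have hp2 : 2 ≤ p := (Fact.out : p.Prime).two_le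
  have hthree := zeroSumSubsets_three_mul_eq_empty hp v h
  have hfour : zeroSumSubsets v X (3 * p + (p - 1)) = ∅ :=
    zeroSumSubsets_eq_empty_of_card_lt v (by omega)
  have hzero := sum_neg_one_pow_mul_card_zeroSumSubsets hp v (X := X) (r := 0) (K := 4) (by omega)
    Even.zero (by rw [Fintype.card_fin]; omega) (by omega)
  have hpred := sum_neg_one_pow_mul_card_zeroSumSubsets hp v (X := X) (r := p - 1) (K := 4)
    (by omega) (Nat.Odd.sub_odd hp odd_one) (by rw [Fintype.card_fin]; omega) (by omega)
  have hmul := sum_neg_one_pow_mul_mul_card_zeroSumSubsets hp v (X := X) (K := 4)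
    (by rw [Fintype.card_fin]; omega) (by omega)
  simp only [add_zero, sum_range_succ, range_one, sum_singleton, pow_zero, zero_mul,
    zeroSumSubsets_zero, card_singleton, Nat.cast_one, mul_one, pow_one, one_mul, h, card_empty,
    Nat.cast_zero, mul_zero, even_two, Even.neg_pow, one_pow, hthree, zero_add, neg_mul, hfour,
    zero_sub, mul_neg, neg_neg, Nat.cast_ofNat, sub_self] at hzero hpred hmul
  have hpairs := card_zeroSumSubsets_pred_eq hp v hX h
  have htwo : (2 : ZMod p) = 0 := by
    linear_combination 2 * hzero - hmul - hpred + hpairs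
  exact absurd (Nat.le_of_dvd two_pos ((ZMod.natCast_eq_zero_iff 2 p).1 htwo)) (by grind)

theorem exists_card_eq_sum_eq_zero {ι : Type*} [Fintype ι] (v : ι → Fin 2 → ZMod p)
    (h : Fintype.card ι = 4 * p - 3) : ∃ I : Finset ι, #I = p ∧ ∑ i ∈ I, v i = 0 := by
  classical
  obtain rfl | hp := (Fact.out : p.Prime).eq_two_or_odd'
  · obtain ⟨i, j, hij, hv⟩ := Fintype.exists_ne_map_eq_of_card_lt v (by simp [h, ZMod.card])
    exact ⟨{i, j}, card_pair hij, by rw [sum_pair hij, hv, CharTwo.add_self_eq_zero]⟩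
  · obtain ⟨I, hI⟩ := zeroSumSubsets_nonempty_of_odd hp v (card_univ.trans h)
    exact ⟨I, (mem_zeroSumSubsets.1 hI).2⟩

end Kemnitz

section LargestPrime

lemma dvd_of_dvd_mul_of_dvd_totient {p q d : ℕ} (hp : p.Prime)
    (hmax : ∀ r, r.Prime → r ∣ q → r ≤ p) (hd : d ∣ p * q) (hd' : d ∣ (p * q).totient) :
    d ∣ q := by
  obtain rfl | hq := q.eq_zero_or_pos
  · exact dvd_zero d
  obtain ⟨k, hk⟩ := hd
  have hpq : p * q ≠ 0 := (Nat.mul_pos hp.pos hq).ne'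
  have hk_prod : p ∣ k * ∏ r ∈ (p * q).primeFactors, (r - 1) := by
    have h := mul_dvd_mul hd' (dvd_prod_of_mem (fun r => r)
      (Nat.mem_primeFactors.2 ⟨hp, dvd_mul_right p q, hpq⟩))
    rw [Nat.totient_mul_prod_primeFactors, hk, mul_assoc, ← hk] at h
    exact Nat.dvd_of_mul_dvd_mul_left (Nat.pos_of_mul_pos_right (hk ▸ hpq.bot_lt)) h
  have hprod : ¬p ∣ ∏ r ∈ (p * q).primeFactors, (r - 1) := by
    rw [Prime.dvd_finsetProd_iff hp.prime]
    rintro ⟨r, hr, hpr⟩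
    obtain ⟨hr, hrpq, -⟩ := Nat.mem_primeFactors.1 hr
    have hrp : r ≤ p := (hr.dvd_mul.1 hrpq).elim (Nat.le_of_dvd hp.pos) (hmax r hr)
    exact Nat.not_dvd_of_pos_of_lt (Nat.sub_pos_of_lt hr.one_lt)
      (lt_of_lt_of_le (Nat.pred_lt hr.ne_zero) hrp) hpr
  obtain ⟨c, rfl⟩ := (hp.dvd_mul.1 hk_prod).resolve_right hprod
  exact ⟨c, Nat.eq_of_mul_eq_mul_left hp.pos (hk.trans (mul_left_comm d p c))⟩

@[elab_as_elim]
theorem largest_prime_induction {P : ∀ m : ℕ, 0 < m → Prop} (one : P 1 one_pos)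
    (mul : ∀ p q (hp : p.Prime) (hq : 0 < q), (∀ r, r.Prime → r ∣ q → r ≤ p) → P q hq →
      P (p * q) (Nat.mul_pos hp.pos hq)) (m : ℕ) (hm : 0 < m) : P m hm := by
  induction m using Nat.strong_induction_on with
  | _ m ih =>
    obtain rfl | hm1 := Nat.eq_or_lt_of_le hm
    · exact one
    obtain ⟨p, hpm, hmax⟩ := exists_max_image m.primeFactors id (Nat.nonempty_primeFactors.2 hm1)
    obtain ⟨hp, ⟨q, rfl⟩, hm0⟩ := Nat.mem_primeFactors.1 hpm
    have hq : 0 < q := Nat.pos_of_mul_pos_left hm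
    refine mul p q hp hq (fun r hr hrq => ?_) (ih q (lt_mul_of_one_lt_left hq hp.one_lt) hq)
    exact hmax r (Nat.mem_primeFactors.2 ⟨hr, hrq.mul_left p, hm0⟩)

end LargestPrime

section Metacyclic

variable {G : Type*} [Group G]

/-- Conjugation by `y` is an automorphism of `⟨x⟩` whose order divides both `p * q` and
`φ (p * q)`, so that the maximality of `p` forces it to divide `q`. -/
lemma commute_pow_of_normal_zpowers {p q : ℕ} {x y : G} (hp : p.Prime) (hq : 0 < q)
    (hmax : ∀ r, r.Prime → r ∣ q → r ≤ p) [(Subgroup.zpowers x).Normal] (hx : x ^ (p * q) = 1)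
    (hy : y ^ (p * q) = 1) : Commute (y ^ q) x := by
  let α : MulAut (Subgroup.zpowers x) := MulAut.conjNormal y
  have hfin : IsOfFinOrder x := isOfFinOrder_iff_pow_eq_one.2 ⟨p * q, Nat.mul_pos hp.pos hq, hx⟩
  have : Finite (Subgroup.zpowers x) := (finite_zpowers.2 hfin).to_subtype
  have hα : orderOf α ∣ p * q :=
    orderOf_dvd_of_pow_eq_one (by rw [← map_pow, hy, map_one])
  have hcard : orderOf α ∣ (p * q).totient := by
    refine (orderOf_dvd_natCard α).trans ?_
    rw [IsCyclic.card_mulAut, Nat.card_zpowers]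
    exact Nat.totient_dvd_of_dvd (orderOf_dvd_of_pow_eq_one hx)
  have hαq : α ^ q = 1 :=
    orderOf_dvd_iff_pow_eq_one.1 (dvd_of_dvd_mul_of_dvd_totient hp hmax hα hcard)
  have hconj : y ^ q * x * (y ^ q)⁻¹ = x := by
    have h := MulAut.conjNormal_apply (y ^ q) (⟨x, Subgroup.mem_zpowers x⟩ : Subgroup.zpowers x)
    rw [map_pow, hαq] at h
    exact h.symm
  exact mul_inv_eq_iff_eq_mul.1 hconj

lemma normal_zpowers_pow {x : G} [hx : (Subgroup.zpowers x).Normal] (n : ℕ) :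
    (Subgroup.zpowers (x ^ n)).Normal := by
  refine ⟨?_⟩
  rintro _ ⟨k, rfl⟩ g
  obtain ⟨l, hl⟩ : ∃ l : ℤ, x ^ l = g * x * g⁻¹ := hx.conj_mem x (Subgroup.mem_zpowers x) g
  refine ⟨l * k, ?_⟩
  simp only [← conj_zpow, ← hl, ← zpow_natCast, ← zpow_mul]
  congr 1
  ring

lemma normal_zpowers_of_mem_center {z : G} (hz : z ∈ Subgroup.center G) :
    (Subgroup.zpowers z).Normal := by
  refine ⟨fun w hw g => ?_⟩
  rwa [Subgroup.mem_center_iff.1 (Subgroup.zpowers_le.2 hz hw) g, mul_inv_cancel_right]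

lemma exists_hom_ofAdd_intCast {p : ℕ} {u : G} (hu : u ^ p = 1) :
    ∃ ϕ : Multiplicative (ZMod p) →* G, ∀ n : ℤ, ϕ (Multiplicative.ofAdd (n : ZMod p)) = u ^ n := by
  have hp : zmultiplesHom (Additive G) (Additive.ofMul u) p = 0 := by simp [← ofMul_pow, hu]
  exact ⟨AddMonoidHom.toMultiplicativeLeft (ZMod.lift p ⟨_, hp⟩), fun n => by simp⟩

lemma exists_hom_forall_mem_range {κ : Type*} [Finite κ] {p : ℕ} {u : κ → G}
    (hcomm : Pairwise fun i j => Commute (u i) (u j)) (hu : ∀ i, u i ^ p = 1) :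
    ∃ θ : Multiplicative (κ → ZMod p) →* G, ∀ i, u i ∈ θ.range := by
  classical
  have := Fintype.ofFinite κ
  choose ϕ hϕ using fun i => exists_hom_ofAdd_intCast (hu i)
  have hϕ_comm : Pairwise fun i j => ∀ a b, Commute (ϕ i a) (ϕ j b) := fun i j hij a b => by
    obtain ⟨k, hk⟩ := ZMod.intCast_surjective a.toAdd
    obtain ⟨l, hl⟩ := ZMod.intCast_surjective b.toAdd
    rw [← ofAdd_toAdd a, ← ofAdd_toAdd b, ← hk, ← hl, hϕ, hϕ]
    exact (hcomm hij).zpow_zpow k l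
  refine ⟨(MonoidHom.noncommPiCoprod ϕ hϕ_comm).comp
    (MulEquiv.funMultiplicative κ (ZMod p)).toMonoidHom, fun i => ?_⟩
  refine ⟨Multiplicative.ofAdd (Pi.single i 1), ?_⟩
  have hsingle :=
    MonoidHom.noncommPiCoprod_mulSingle (hcomm := hϕ_comm) ϕ i (Multiplicative.ofAdd 1)
  exact hsingle.trans (by simpa using hϕ i 1)

/-- `G` is generated by `x` and `y` as a quotient of a semidirect product `C_m ⋊ C_m` is by the
images of the two generators. Unlike the semidirect products themselves, these groups are closed
under quotients. -/
structure MetacyclicPair (m : ℕ) (x y : G) : Prop where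
  pow_left : x ^ m = 1
  pow_right : y ^ m = 1
  normal : (Subgroup.zpowers x).Normal
  sup_eq_top : Subgroup.zpowers x ⊔ Subgroup.zpowers y = ⊤

namespace MetacyclicPair

variable {m p q : ℕ} {x y : G}

lemma map {H : Type*} [Group H] (h : MetacyclicPair m x y) {f : G →* H}
    (hf : Function.Surjective f) (hx : f x ^ q = 1) (hy : f y ^ q = 1) :
    MetacyclicPair q (f x) (f y) where
  pow_left := hx
  pow_right := hy
  normal := by
    rw [← MonoidHom.map_zpowers]
    exact h.normal.map f hf
  sup_eq_top := by
    rw [← MonoidHom.map_zpowers, ← MonoidHom.map_zpowers, ← Subgroup.map_sup, h.sup_eq_top,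
      ← MonoidHom.range_eq_map, MonoidHom.range_eq_top.2 hf]

lemma pow_mem_center (h : MetacyclicPair (p * q) x y) (hp : p.Prime) (hq : 0 < q)
    (hmax : ∀ r, r.Prime → r ∣ q → r ≤ p) : y ^ q ∈ Subgroup.center G := by
  have := h.normal
  have hx : x ∈ Subgroup.centralizer {y ^ q} := Subgroup.mem_centralizer_singleton_iff.2
    (commute_pow_of_normal_zpowers hp hq hmax h.pow_left h.pow_right).symm
  have hy : y ∈ Subgroup.centralizer {y ^ q} :=
    Subgroup.mem_centralizer_singleton_iff.2 (Commute.self_pow y q)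
  have htop : (⊤ : Subgroup G) ≤ Subgroup.centralizer {y ^ q} :=
    h.sup_eq_top ▸ sup_le (Subgroup.zpowers_le.2 hx) (Subgroup.zpowers_le.2 hy)
  exact Subgroup.mem_center_iff.2 fun g =>
    Subgroup.mem_centralizer_singleton_iff.1 (htop (Subgroup.mem_top g))

lemma subsingleton (h : MetacyclicPair 1 x y) : Subsingleton G := by
  have htop := h.sup_eq_top
  rw [← pow_one x, ← pow_one y, h.pow_left, h.pow_right, Subgroup.zpowers_one_eq_bot, sup_bot_eq]
    at htop
  exact Subgroup.subsingleton_iff.1 (subsingleton_of_bot_eq_top htop)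

theorem exists_normal_le_range (h : MetacyclicPair (p * q) x y) (hp : p.Prime)
    (hq : 0 < q) (hmax : ∀ r, r.Prime → r ∣ q → r ≤ p) :
    ∃ (K : Subgroup G) (_ : K.Normal) (θ : Multiplicative (Fin 2 → ZMod p) →* G),
      MetacyclicPair q (x : G ⧸ K) (y : G ⧸ K) ∧ K ≤ θ.range := by
  have := h.normal
  have hcenter := h.pow_mem_center hp hq hmax
  have := normal_zpowers_pow (x := x) q
  have := normal_zpowers_of_mem_center hcenter
  let K := Subgroup.zpowers (x ^ q) ⊔ Subgroup.zpowers (y ^ q)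
  have hxK : x ^ q ∈ K := Subgroup.mem_sup_left (Subgroup.mem_zpowers _)
  have hyK : y ^ q ∈ K := Subgroup.mem_sup_right (Subgroup.mem_zpowers _)
  have hcomm : Commute (x ^ q) (y ^ q) := Subgroup.mem_center_iff.1 hcenter (x ^ q)
  obtain ⟨θ, hθ⟩ := exists_hom_forall_mem_range (p := p) (u := ![x ^ q, y ^ q])
    (by simp [Pairwise, Fin.forall_fin_two, hcomm, hcomm.symm])
    (by simp [Fin.forall_fin_two, ← pow_mul, mul_comm q p, h.pow_left, h.pow_right])
  refine ⟨K, inferInstance, θ, h.map (QuotientGroup.mk'_surjective K) ?_ ?_, ?_⟩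
  · rw [← map_pow]
    exact (QuotientGroup.eq_one_iff _).2 hxK
  · rw [← map_pow]
    exact (QuotientGroup.eq_one_iff _).2 hyK
  · exact sup_le (Subgroup.zpowers_le.2 (hθ 0)) (Subgroup.zpowers_le.2 (hθ 1))

end MetacyclicPair

lemma metacyclicPair_semidirectProduct (m : ℕ)
    (φ : Multiplicative (ZMod m) →* MulAut (Multiplicative (ZMod m))) :
    MetacyclicPair m (SemidirectProduct.inl (φ := φ) (Multiplicative.ofAdd 1))
      (SemidirectProduct.inr (φ := φ) (Multiplicative.ofAdd 1)) := by
  have hpow : Multiplicative.ofAdd (1 : ZMod m) ^ m = 1 := by simp [← ofAdd_nsmul]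
  have htop : Subgroup.zpowers (Multiplicative.ofAdd (1 : ZMod m)) = ⊤ := by
    refine eq_top_iff.2 fun a _ => ?_
    obtain ⟨k, hk⟩ := ZMod.intCast_surjective a.toAdd
    exact ⟨k, by simp [← ofAdd_zsmul, hk]⟩
  have hinl : Subgroup.zpowers (SemidirectProduct.inl (φ := φ) (Multiplicative.ofAdd 1)) =
      (SemidirectProduct.inl (φ := φ)).range := by
    rw [← MonoidHom.map_zpowers, htop, MonoidHom.range_eq_map]
  have hinr : Subgroup.zpowers (SemidirectProduct.inr (φ := φ) (Multiplicative.ofAdd 1)) =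
      (SemidirectProduct.inr (φ := φ)).range := by
    rw [← MonoidHom.map_zpowers, htop, MonoidHom.range_eq_map]
  refine ⟨by rw [← map_pow, hpow, map_one], by rw [← map_pow, hpow, map_one], ?_, ?_⟩
  · rw [hinl, SemidirectProduct.range_inl_eq_ker_rightHom]
    infer_instance
  · rw [hinl, hinr, eq_top_iff]
    intro g _
    rw [← SemidirectProduct.inl_left_mul_inr_right g]
    exact Subgroup.mul_mem_sup ⟨_, rfl⟩ ⟨_, rfl⟩

end Metacyclic

section Sequences

variable {G H : Type*} [Group G] [Group H]

/-- `g` is the product of the terms of the sequence `S` in some order; `IsProductOne S` is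
`IsOrderedProd S 1`. -/
def IsOrderedProd (S : Multiset G) (g : G) : Prop :=
  ∃ l : List G, (l : Multiset G) = S ∧ l.prod = g

lemma IsOrderedProd.zero : IsOrderedProd (0 : Multiset G) 1 :=
  ⟨[], rfl, rfl⟩

lemma IsOrderedProd.add {S T : Multiset G} {g h : G} (hS : IsOrderedProd S g)
    (hT : IsOrderedProd T h) : IsOrderedProd (S + T) (g * h) := by
  obtain ⟨l, rfl, rfl⟩ := hS
  obtain ⟨l', rfl, rfl⟩ := hT
  exact ⟨l ++ l', rfl, List.prod_append⟩

lemma IsOrderedProd.sum {ι A : Type*} [AddCommMonoid A] {θ : Multiplicative A →* G}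
    {M : ι → Multiset G} {w : ι → A}
    (h : ∀ i, IsOrderedProd (M i) (θ (Multiplicative.ofAdd (w i)))) (I : Finset ι) :
    IsOrderedProd (∑ i ∈ I, M i) (θ (Multiplicative.ofAdd (∑ i ∈ I, w i))) := by
  induction I using Finset.cons_induction with
  | empty => simpa using IsOrderedProd.zero
  | cons i I hi ih =>
    rw [sum_cons, sum_cons, ofAdd_add, map_mul]
    exact (h i).add ih

lemma exists_coe_le_map_eq {α β : Type*} (f : α → β) (l : List β) {S : Multiset α}
    (h : (l : Multiset β) ≤ S.map f) : ∃ l' : List α, (l' : Multiset α) ≤ S ∧ l'.map f = l := by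
  induction l generalizing S with
  | nil => exact ⟨[], S.zero_le, rfl⟩
  | cons b l ih =>
    obtain ⟨a, ha, rfl⟩ := Multiset.mem_map.1 (Multiset.mem_of_le h (List.mem_cons_self (a := b)))
    obtain ⟨S, rfl⟩ := Multiset.exists_cons_of_mem ha
    rw [Multiset.map_cons, ← Multiset.cons_coe, Multiset.cons_le_cons_iff] at h
    obtain ⟨l', hl', rfl⟩ := ih h
    exact ⟨a :: l', Multiset.cons_le_cons a hl', rfl⟩

lemma IsProductOne.exists_le_of_map {f : G →* H} {S : Multiset G} {T : Multiset H}
    (hT : IsProductOne T) (hTS : T ≤ S.map f) :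
    ∃ T' ≤ S, Multiset.card T' = Multiset.card T ∧ ∃ g ∈ f.ker, IsOrderedProd T' g := by
  obtain ⟨l, rfl, hl⟩ := hT
  obtain ⟨l', hl'S, rfl⟩ := exists_coe_le_map_eq f l hTS
  exact ⟨l', hl'S, by simp, l'.prod, by rw [MonoidHom.mem_ker, map_list_prod, hl], l', rfl, rfl⟩

variable (G) in
/-- Every sequence of length at least `N` over `G` has a product-one subsequence whose length lies
in `L`. In the notation of zero-sum theory, `s_L(G) ≤ N`. -/
def ForcesProductOne (L : Set ℕ) (N : ℕ) : Prop :=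
  ∀ S : Multiset G, N ≤ Multiset.card S → ∃ T ≤ S, Multiset.card T ∈ L ∧ IsProductOne T

lemma forcesProductOne_one [Subsingleton G] {L : Set ℕ} (hL : 1 ∈ L) : ForcesProductOne G L 1 := by
  intro S hS
  obtain ⟨g, hg⟩ := Multiset.card_pos_iff_exists_mem.1 hS
  exact ⟨{g}, Multiset.singleton_le.2 hg, by simpa using hL, [g], rfl, Subsingleton.elim _ _⟩

lemma ForcesProductOne.exists_le_ker {L : Set ℕ} {N : ℕ} (h : ForcesProductOne H L N)
    (f : G →* H) {S : Multiset G} (hS : N ≤ Multiset.card S) :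
    ∃ T ≤ S, Multiset.card T ∈ L ∧ ∃ g ∈ f.ker, IsOrderedProd T g := by
  obtain ⟨T, hTS, hTL, hT⟩ := h (S.map f) (by rwa [Multiset.card_map])
  obtain ⟨T', hT'S, hcard, hT'⟩ := hT.exists_le_of_map hTS
  exact ⟨T', hT'S, hcard ▸ hTL, hT'⟩

lemma ForcesProductOne.exists_blocks {q N : ℕ} (h : ForcesProductOne H {q} (q + N)) (f : G →* H)
    (k : ℕ) {S : Multiset G} (hS : k * q + N ≤ Multiset.card S) :
    ∃ B : Fin k → Multiset G, ∑ i, B i ≤ S ∧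
      ∀ i, Multiset.card (B i) = q ∧ ∃ g ∈ f.ker, IsOrderedProd (B i) g := by
  induction k generalizing S with
  | zero => exact ⟨Fin.elim0, by simp, fun i => i.elim0⟩
  | succ k ih =>
    rw [add_one_mul] at hS
    obtain ⟨T, hTS, hTq, hT⟩ := h.exists_le_ker f (S := S) (by omega)
    obtain ⟨S, rfl⟩ := Multiset.le_iff_exists_add.1 hTS
    rw [Multiset.card_add, Set.mem_singleton_iff.1 hTq] at hS
    obtain ⟨B, hBS, hB⟩ := ih (S := S) (by omega)
    exact ⟨Fin.cons T B, by simpa [Fin.sum_univ_succ] using hBS,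
      Fin.forall_fin_succ.2 ⟨⟨hTq, hT⟩, hB⟩⟩

variable {p q : ℕ} [Fact p.Prime] {ι κ : Type*} [Fintype ι]

lemma exists_card_eq_isProductOne_sum (θ : Multiplicative (Fin 2 → ZMod p) →* G)
    {M : ι → Multiset G} (hM : ∀ i, ∃ g ∈ θ.range, IsOrderedProd (M i) g)
    (h : Fintype.card ι = 4 * p - 3) :
    ∃ I : Finset ι, #I = p ∧ IsProductOne (∑ i ∈ I, M i) := by
  have hM' : ∀ i, ∃ w, IsOrderedProd (M i) (θ (Multiplicative.ofAdd w)) := by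
    simpa [Multiplicative.exists] using hM
  choose w hw using hM'
  obtain ⟨I, hI, hsum⟩ := exists_card_eq_sum_eq_zero w h
  have hprod := IsOrderedProd.sum hw I
  rw [hsum, ofAdd_zero, map_one] at hprod
  exact ⟨I, hI, hprod⟩

/-- The quotients `card (M i) / q` are summed along with the products of the blocks, as one more
coordinate. -/
lemma exists_nonempty_isProductOne_sum [Fintype κ] (θ : Multiplicative (κ → ZMod p) →* G)
    {M : ι → Multiset G} (hM : ∀ i, ∃ g ∈ θ.range, IsOrderedProd (M i) g)
    (hq : ∀ i, q ∣ Multiset.card (M i)) (h : (Fintype.card κ + 1) * (p - 1) < Fintype.card ι) :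
    ∃ I : Finset ι, I.Nonempty ∧ p * q ∣ Multiset.card (∑ i ∈ I, M i) ∧
      IsProductOne (∑ i ∈ I, M i) := by
  have hM' : ∀ i, ∃ w, IsOrderedProd (M i) (θ (Multiplicative.ofAdd w)) := by
    simpa [Multiplicative.exists] using hM
  choose w hw using hM'
  choose c hc using hq
  obtain ⟨I, hI, hsum⟩ := exists_nonempty_sum_eq_zero
    (fun i (k : Option κ) => k.elim (c i : ZMod p) (w i)) (by rwa [Fintype.card_option])
  have hcI : ∑ i ∈ I, (c i : ZMod p) = 0 := by simpa using congrFun hsum none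
  have hwI : ∑ i ∈ I, w i = 0 := by
    funext k
    simpa using congrFun hsum (some k)
  have hprod := IsOrderedProd.sum hw I
  rw [hwI, ofAdd_zero, map_one] at hprod
  refine ⟨I, hI, ?_, hprod⟩
  rw [Multiset.card_sum, sum_congr rfl fun i _ => hc i, ← mul_sum, mul_comm p]
  exact mul_dvd_mul_left q ((ZMod.natCast_eq_zero_iff _ p).1 (by exact_mod_cast hcI))

end Sequences

section Extension

variable {G H : Type*} [Group G] [Group H] {p q : ℕ} [Fact p.Prime] {f : G →* H}
  {θ : Multiplicative (Fin 2 → ZMod p) →* G}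

theorem ForcesProductOne.singleton_mul (hker : f.ker ≤ θ.range) (hq : 0 < q)
    (h : ForcesProductOne H {q} (4 * q - 3)) : ForcesProductOne G {p * q} (4 * (p * q) - 3) := by
  intro S hS
  have hp : 0 < p := (Fact.out : p.Prime).pos
  have hlen : (4 * p - 3) * q + (3 * q - 3) = 4 * (p * q) - 3 := by
    zify [show 3 ≤ 4 * p by omega, show 3 ≤ 3 * q by omega, show 3 ≤ 4 * (p * q) by nlinarith]
    ring
  rw [show 4 * q - 3 = q + (3 * q - 3) by omega] at h
  obtain ⟨B, hBS, hB⟩ := h.exists_blocks f (4 * p - 3) (hlen.trans_le hS)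
  obtain ⟨I, hI, hprod⟩ := exists_card_eq_isProductOne_sum θ
    (fun i => (hB i).2.imp fun g hg => ⟨hker hg.1, hg.2⟩) (Fintype.card_fin _)
  refine ⟨∑ i ∈ I, B i, (sum_le_sum_of_subset (subset_univ I)).trans hBS, ?_, hprod⟩
  rw [Multiset.card_sum, sum_congr rfl fun i _ => (hB i).1, sum_const, hI]
  rfl

theorem ForcesProductOne.dvd_mul (hker : f.ker ≤ θ.range) (hq : 0 < q)
    (h : ForcesProductOne H {q} (4 * q - 3))
    (h' : ForcesProductOne H {n | 0 < n ∧ q ∣ n} (3 * q - 2)) :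
    ForcesProductOne G {n | 0 < n ∧ p * q ∣ n} (3 * (p * q) - 2) := by
  intro S hS
  have hp : 0 < p := (Fact.out : p.Prime).pos
  have hlen : (3 * p - 3) * q + (3 * q - 2) = 3 * (p * q) - 2 := by
    zify [show 3 ≤ 3 * p by omega, show 2 ≤ 3 * q by omega, show 2 ≤ 3 * (p * q) by nlinarith]
    ring
  rw [show 4 * q - 3 = q + (3 * q - 3) by omega] at h
  obtain ⟨B, hBS, hB⟩ := h.exists_blocks f (3 * p - 3) (S := S) (by omega)
  obtain ⟨R, rfl⟩ := Multiset.le_iff_exists_add.1 hBS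
  have hR : 3 * q - 2 ≤ Multiset.card R := by
    rw [Multiset.card_add, Multiset.card_sum, sum_congr rfl fun i _ => (hB i).1, sum_const,
      card_univ, Fintype.card_fin, smul_eq_mul] at hS
    omega
  obtain ⟨T, hTR, ⟨hTpos, hTdvd⟩, hT⟩ := h'.exists_le_ker f hR
  let M : Option (Fin (3 * p - 3)) → Multiset G := fun i => i.elim T B
  have hMS : ∑ i, M i ≤ ∑ i, B i + R := by
    rw [Fintype.sum_option, add_comm]
    exact add_le_add_right hTR _
  have hpos : ∀ i, 0 < Multiset.card (M i) :=
    Option.forall.2 ⟨hTpos, fun i => hq.trans_eq (hB i).1.symm⟩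
  have hdvd : ∀ i, q ∣ Multiset.card (M i) :=
    Option.forall.2 ⟨hTdvd, fun i => (hB i).1.symm.dvd⟩
  have hM : ∀ i, ∃ g ∈ f.ker, IsOrderedProd (M i) g := Option.forall.2 ⟨hT, fun i => (hB i).2⟩
  obtain ⟨I, hI, hcard, hprod⟩ := exists_nonempty_isProductOne_sum θ
    (fun i => (hM i).imp fun g hg => ⟨hker hg.1, hg.2⟩) hdvd
    (by simp only [Fintype.card_option, Fintype.card_fin]; omega)
  refine ⟨∑ i ∈ I, M i, (sum_le_sum_of_subset (subset_univ I)).trans hMS, ⟨?_, hcard⟩, hprod⟩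
  rw [Multiset.card_sum]
  exact sum_pos (fun i _ => hpos i) hI

end Extension

namespace MetacyclicPair

theorem forcesProductOne_singleton {m : ℕ} (hm : 0 < m) {G : Type*} [Group G] {x y : G}
    (h : MetacyclicPair m x y) : ForcesProductOne G {m} (4 * m - 3) := by
  induction m, hm using largest_prime_induction generalizing G with
  | one =>
    have := h.subsingleton
    exact forcesProductOne_one rfl
  | mul p q hp hq hmax ih =>
    have := Fact.mk hp
    obtain ⟨K, _, θ, hK, hθ⟩ := h.exists_normal_le_range hp hq hmax
    exact (ih hK).singleton_mul ((QuotientGroup.ker_mk' K).trans_le hθ) hq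

theorem forcesProductOne_dvd {m : ℕ} (hm : 0 < m) {G : Type*} [Group G] {x y : G}
    (h : MetacyclicPair m x y) : ForcesProductOne G {n | 0 < n ∧ m ∣ n} (3 * m - 2) := by
  induction m, hm using largest_prime_induction generalizing G with
  | one =>
    have := h.subsingleton
    exact forcesProductOne_one ⟨one_pos, dvd_rfl⟩
  | mul p q hp hq hmax ih =>
    have := Fact.mk hp
    obtain ⟨K, _, θ, hK, hθ⟩ := h.exists_normal_le_range hp hq hmax
    exact ForcesProductOne.dvd_mul ((QuotientGroup.ker_mk' K).trans_le hθ) hq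
      (hK.forcesProductOne_singleton hq) (ih hK)

end MetacyclicPair

theorem product_one_subseq_dvd_m_general {m : ℕ} (hm : 0 < m) {G : Type*} [Group G] {x y : G}
    (h : MetacyclicPair m x y) (S : Multiset G) (hS : 3 * m - 2 ≤ Multiset.card S) :
    ∃ T ≤ S, T ≠ 0 ∧ m ∣ Multiset.card T ∧ IsProductOne T := by
  obtain ⟨T, hTS, ⟨hpos, hdvd⟩, hT⟩ := h.forcesProductOne_dvd hm S hS
  exact ⟨T, hTS, Multiset.card_pos.1 hpos, hdvd, hT⟩

/-- Every sequence of length `3m − 2` over `C_m ⋉_φ C_m` contains a nonempty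
product-one subsequence whose length is divisible by `m`. -/
theorem product_one_subseq_dvd_m (m : ℕ) (hm : 0 < m)
    (φ : Multiplicative (ZMod m) →* MulAut (Multiplicative (ZMod m)))
    (S : Multiset (Multiplicative (ZMod m) ⋊[φ] Multiplicative (ZMod m)))
    (hS : Multiset.card S = 3 * m - 2) :
    ∃ T ≤ S, T ≠ 0 ∧ m ∣ Multiset.card T ∧ IsProductOne T :=
  product_one_subseq_dvd_m_general hm (metacyclicPair_semidirectProduct m φ) S hS.ge
end

section
/- Let G ≅ C_m ⋉_φ C_{mn} for positive integers m, n. Then every sequence S over G of length |S| = 2m + mn − 2 contains a nonempty product-one subsequence T of length |T| ∈ [1, mn]. -/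
/-!
Let `p` be the least prime factor of `m = p * m'`. The order of `Aut C_p` is `p - 1`, which is
coprime to `m`, so `C_m` acts trivially on `C_{mn}` modulo `p`, and the exponents modulo `p` of a
product of elements `x ^ a * y ^ b` do not depend on the order of the factors. Any `3p - 2`
elements of `C_p²` include between `1` and `p` with sum zero (Chevalley–Warning), so any `3p - 2`
elements of the group include between `1` and `p` whose product lies in the part generated by
`x ^ p` and `y ^ p`, where `m'` plays the role of `m`. A sequence of length `2m + mn - 2` contains
`2m' + m'n - 2` disjoint blocks of this kind, and induction on `m` applies to their products. For
`m = 1`, two partial products of `n` elements of `C_n` coincide.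
-/

section ZeroSum

open Module

lemma exists_ne_forall_eval_eq_zero {K σ κ : Type*} [Field K] [Finite K] [Fintype σ]
    [Fintype κ] {f : κ → MvPolynomial σ K}
    (hf : ∑ j, (f j).totalDegree < Fintype.card σ) {x₀ : σ → K}
    (hx₀ : ∀ j, MvPolynomial.eval x₀ (f j) = 0) :
    ∃ x ≠ x₀, ∀ j, MvPolynomial.eval x (f j) = 0 := by
  cases nonempty_fintype K
  have := Classical.decEq K
  have := Classical.decEq σ
  obtain ⟨p, _⟩ := CharP.exists K
  have hp : p.Prime := CharP.char_is_prime K p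
  let N := {x : σ → K // ∀ j, MvPolynomial.eval x (f j) = 0}
  have : Nonempty N := ⟨x₀, hx₀⟩
  have hdvd : p ∣ Nat.card N := by
    rw [Nat.card_eq_fintype_card]
    exact char_dvd_card_solutions_of_fintype_sum_lt p hf
  have : Nontrivial N := Finite.one_lt_card_iff_nontrivial.1
    (hp.one_lt.trans_le (Nat.le_of_dvd Nat.card_pos hdvd))
  obtain ⟨⟨x, hx⟩, hne⟩ := exists_ne (⟨x₀, hx₀⟩ : N)
  exact ⟨x, fun h => hne (Subtype.ext h), hx⟩

variable {K V ι : Type*} [Field K] [Fintype K] [AddCommGroup V]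

lemma exists_nonempty_sum_eq_zero_s9 [Module K V] [Module.Finite K V] {s : Finset ι} (f : ι → V)
    (hs : finrank K V * (Fintype.card K - 1) < s.card) :
    ∃ t ⊆ s, t.Nonempty ∧ ∑ i ∈ t, f i = 0 := by
  classical
  let q := Fintype.card K
  have hq : q - 1 ≠ 0 := Nat.sub_ne_zero_of_lt Fintype.one_lt_card
  let b := finBasis K V
  let P : Fin (finrank K V) → MvPolynomial s K := fun j =>
    ∑ i : s, b.repr (f i) j • MvPolynomial.X i ^ (q - 1)
  have hdeg (j) : (P j).totalDegree ≤ q - 1 :=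
    MvPolynomial.totalDegree_finsetSum_le fun i _ =>
      (MvPolynomial.totalDegree_smul_le ..).trans (MvPolynomial.totalDegree_X_pow ..).le
  have hsum : ∑ j, (P j).totalDegree < Fintype.card s :=
    calc ∑ j, (P j).totalDegree ≤ ∑ _j : Fin (finrank K V), (q - 1) :=
          Finset.sum_le_sum fun j _ => hdeg j
      _ = finrank K V * (q - 1) := by simp
      _ < Fintype.card s := by simpa using hs
  obtain ⟨x, hx₀, hx⟩ := exists_ne_forall_eval_eq_zero hsum (x₀ := 0)
    fun j => by simp [P, hq]
  have hpow (i : s) : x i ^ (q - 1) = if x i ≠ 0 then 1 else 0 := by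
    split_ifs with h
    · exact FiniteField.pow_card_sub_one_eq_one _ h
    · rw [not_not.1 h, zero_pow hq]
  refine ⟨({i | x i ≠ 0} : Finset s).map (.subtype _), ?_, ?_, ?_⟩
  · exact Finset.map_subtype_subset _
  · obtain ⟨i, hi⟩ := Function.ne_iff.1 hx₀
    exact ⟨i, by simpa using hi⟩
  · refine b.repr.map_eq_zero_iff.1 (Finsupp.ext fun j => ?_)
    rw [Finset.sum_map, map_sum, Finsupp.finsetSum_apply, Finset.sum_filter]
    simpa [P, hpow] using hx j

lemma exists_nonempty_sum_eq_zero_two_mul_card_le [Module K V] [Module.Finite K V]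
    {t : Finset ι} {f : ι → V}
    (ht : finrank K V * (Fintype.card K - 1) + 1 < t.card) (hf : ∑ i ∈ t, f i = 0) :
    ∃ u ⊆ t, u.Nonempty ∧ 2 * u.card ≤ t.card ∧ ∑ i ∈ u, f i = 0 := by
  classical
  obtain ⟨t', htt', ht'⟩ := Finset.exists_subset_card_eq ht.le
  obtain ⟨u, hut', hu, hfu⟩ := exists_nonempty_sum_eq_zero_s9 (K := K) (s := t') f (by omega)
  have hut : u ⊆ t := hut'.trans htt'
  have hlt : u.card < t.card := (Finset.card_le_card hut').trans_lt (ht' ▸ ht)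
  have hcard := Finset.card_sdiff_add_card_eq_card hut
  by_cases hle : 2 * u.card ≤ t.card
  · exact ⟨u, hut, hu, hle, hfu⟩
  · refine ⟨t \ u, Finset.sdiff_subset, Finset.card_pos.1 (by omega), by omega, ?_⟩
    simpa [hfu, hf] using Finset.sum_sdiff (f := f) hut

lemma exists_subset_card_le_sum_eq_zero {p : ℕ} [Fact p.Prime] [Module (ZMod p) V]
    [Module.Finite (ZMod p) V] (hV : finrank (ZMod p) V ≤ 2)
    {s : Finset ι} (f : ι → V) (hs : 3 * p - 2 ≤ s.card) :
    ∃ t ⊆ s, t.Nonempty ∧ t.card ≤ p ∧ ∑ i ∈ t, f i = 0 := by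
  have hp := (Fact.out : p.Prime).two_le
  have hdeg : finrank (ZMod p) V * (p - 1) ≤ 2 * (p - 1) := Nat.mul_le_mul_right _ hV
  obtain ⟨s', hs's, hs'⟩ := Finset.exists_subset_card_eq hs
  obtain ⟨t, hts', ht, hsum⟩ := exists_nonempty_sum_eq_zero_s9 (K := ZMod p) (s := s')
    (fun i => (f i, (1 : ZMod p))) (by
      rw [finrank_prod, finrank_self, ZMod.card, add_mul, hs']
      omega)
  obtain ⟨hft, h1t⟩ := Prod.ext_iff.1 hsum
  have hdvd : p ∣ t.card := by
    rw [← CharP.cast_eq_zero_iff (ZMod p)]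
    simpa [Prod.snd_sum] using h1t
  replace hft : ∑ i ∈ t, f i = 0 := by simpa [Prod.fst_sum] using hft
  have hts := hts'.trans hs's
  by_cases hle : t.card ≤ p
  · exact ⟨t, hts, ht, hle, hft⟩
  have hlt : t.card < 3 * p := by have := Finset.card_le_card hts'; omega
  have h2p : t.card = 2 * p := by
    obtain ⟨c, hc⟩ := hdvd
    have hc_gt : 1 < c := Nat.lt_of_mul_lt_mul_left (a := p) (by omega)
    have hc_lt : c < 3 := Nat.lt_of_mul_lt_mul_left (a := p) (by omega)
    obtain rfl : c = 2 := by omega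
    rw [hc, mul_comm]
  obtain ⟨u, hut, hu, hcard, hfu⟩ := exists_nonempty_sum_eq_zero_two_mul_card_le (K := ZMod p)
    (t := t) (by rw [ZMod.card]; omega) hft
  exact ⟨u, hut.trans hts, hu, by omega, hfu⟩

lemma exists_le_card_le_sum_map_eq_zero {p : ℕ} [Fact p.Prime] [Module (ZMod p) V]
    [Module.Finite (ZMod p) V] (hV : finrank (ZMod p) V ≤ 2)
    {S : Multiset ι} (f : ι → V) (hS : 3 * p - 2 ≤ Multiset.card S) :
    ∃ T ≤ S, T ≠ 0 ∧ Multiset.card T ≤ p ∧ (T.map f).sum = 0 := by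
  classical
  obtain ⟨t, htS, ht, hcard, hsum⟩ := exists_subset_card_le_sum_eq_zero hV (s := S.toEnumFinset)
    (fun i => f i.1) (by rwa [Multiset.card_toEnumFinset])
  refine ⟨t.val.map Prod.fst, Multiset.map_fst_le_of_subset_toEnumFinset htS, ?_, ?_, ?_⟩
  · simpa using ht.ne_empty
  · simpa using hcard
  · simpa [Multiset.map_map, Function.comp_def] using hsum

end ZeroSum

section ShortProducts

lemma exists_list_le_map_eq {α β : Type*} {f : α → β} {S : Multiset α} {l : List β}
    (h : ↑l ≤ S.map f) : ∃ l' : List α, ↑l' ≤ S ∧ l'.map f = l := by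
  induction l generalizing S with
  | nil => exact ⟨[], by simp⟩
  | cons b l ih =>
    rw [← Multiset.cons_coe] at h
    obtain ⟨a, ha, rfl⟩ := Multiset.mem_map.1 (Multiset.mem_of_le h (Multiset.mem_cons_self b ↑l))
    obtain ⟨S, rfl⟩ := Multiset.exists_cons_of_mem ha
    rw [Multiset.map_cons, Multiset.cons_le_cons_iff] at h
    obtain ⟨l', hl', rfl⟩ := ih h
    exact ⟨a :: l', by simpa using Multiset.cons_le_cons a hl', rfl⟩

/-- Every sequence of at least `k` terms in `A` has a nonempty subsequence of length at most `ℓ`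
some ordering of which has its product in `B`. For `B = {1}` these are the usual bounds for short
product-one subsequences; a general `B` makes the bounds composable, see `ShortProductsInto.trans`.
The ordered subsequence is recorded as a list. -/
def ShortProductsInto {M : Type*} [Monoid M] (A B : Set M) (k ℓ : ℕ) : Prop :=
  ∀ S : Multiset M, (∀ g ∈ S, g ∈ A) → k ≤ Multiset.card S →
    ∃ l : List M, l ≠ [] ∧ ↑l ≤ S ∧ l.length ≤ ℓ ∧ l.prod ∈ B

namespace ShortProductsInto

variable {M : Type*} [Monoid M] {A A' B C : Set M} {k k' ℓ ℓ' : ℕ}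

lemma mono (h : ShortProductsInto A B k ℓ) (hA : A' ⊆ A) (hk : k ≤ k') (hℓ : ℓ ≤ ℓ') :
    ShortProductsInto A' B k' ℓ' := fun S hSA hS =>
  let ⟨l, hl₀, hlS, hlℓ, hlB⟩ := h S (fun g hg => hA (hSA g hg)) (hk.trans hS)
  ⟨l, hl₀, hlS, hlℓ.trans hℓ, hlB⟩

lemma exists_disjoint_blocks (h : ShortProductsInto A B k ℓ) (b : ℕ) {S : Multiset M}
    (hSA : ∀ g ∈ S, g ∈ A) (hS : k + ℓ * b ≤ Multiset.card S) :
    ∃ bs : List (List M), bs.length = b + 1 ∧ ↑bs.flatten ≤ S ∧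
      ∀ l ∈ bs, l ≠ [] ∧ l.length ≤ ℓ ∧ l.prod ∈ B := by
  induction b generalizing S with
  | zero =>
    obtain ⟨l, hl₀, hlS, hl⟩ := h S hSA (by simpa using hS)
    exact ⟨[l], by simpa using ⟨hlS, hl₀, hl⟩⟩
  | succ b ih =>
    rw [mul_add_one] at hS
    obtain ⟨l, hl₀, hlS, hlℓ, hlB⟩ := h S hSA (by omega)
    obtain ⟨R, rfl⟩ := Multiset.le_iff_exists_add.1 hlS
    rw [Multiset.card_add, Multiset.coe_card] at hS
    obtain ⟨bs, hlen, hbsR, hbs⟩ := ih (S := R)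
      (fun g hg => hSA g (Multiset.mem_add.2 (.inr hg))) (by omega)
    refine ⟨l :: bs, by simp [hlen], ?_, List.forall_mem_cons.2 ⟨⟨hl₀, hlℓ, hlB⟩, hbs⟩⟩
    rw [List.flatten_cons, ← Multiset.coe_add]
    exact add_le_add_right hbsR _

lemma trans {b L : ℕ} (hAB : ShortProductsInto A B k ℓ) (hBC : ShortProductsInto B C (b + 1) L) :
    ShortProductsInto A C (k + ℓ * b) (ℓ * L) := by
  intro S hSA hS
  obtain ⟨bs, hlen, hbsS, hbs⟩ := hAB.exists_disjoint_blocks b hSA hS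
  obtain ⟨l, hl₀, hl, hlL, hlC⟩ := hBC (Multiset.map List.prod bs)
    (by simpa using fun l hl => (hbs l hl).2.2) (by simp [hlen])
  obtain ⟨cs, hcs, rfl⟩ := exists_list_le_map_eq hl
  have hmem : ∀ c ∈ cs, c ∈ bs := fun c hc => Multiset.mem_of_le hcs hc
  refine ⟨cs.flatten, ?_, ?_, ?_, by rwa [List.prod_flatten]⟩
  · obtain ⟨c, hc⟩ := List.exists_mem_of_ne_nil cs (by simpa using hl₀)
    exact fun h => (hbs c (hmem c hc)).1 (List.flatten_eq_nil_iff.1 h c hc)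
  · refine le_trans ?_ hbsS
    obtain ⟨ds, hds, hsub⟩ := Multiset.coe_le.1 hcs
    exact hds.flatten.symm.subperm.trans hsub.flatten.subperm
  · calc cs.flatten.length = (cs.map List.length).sum := List.length_flatten
      _ ≤ (cs.map List.length).length • ℓ := List.sum_le_card_nsmul _ _ <| by
          simpa using fun c hc => (hbs c (hmem c hc)).2.1
      _ ≤ ℓ * L := by
          rw [List.length_map] at hlL ⊢
          rw [smul_eq_mul, mul_comm]
          gcongr

end ShortProductsInto

lemma exists_infix_length_le_prod_eq_one {G : Type*} [Group G] [Finite G] {L : List G}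
    (hL : Nat.card G ≤ L.length) :
    ∃ l, l ≠ [] ∧ l <:+: L ∧ l.length ≤ Nat.card G ∧ l.prod = 1 := by
  cases nonempty_fintype G
  obtain ⟨i, j, hij, hprod⟩ : ∃ i j : Fin (Nat.card G + 1), i < j ∧
      (L.take i).prod = (L.take j).prod := by
    obtain ⟨i, j, hne, h⟩ := Fintype.exists_ne_map_eq_of_card_lt
      (fun i : Fin (Nat.card G + 1) => (L.take i).prod) (by simp)
    rcases hne.lt_or_gt with hlt | hlt
    exacts [⟨i, j, hlt, h⟩, ⟨j, i, hlt, h.symm⟩]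
  rw [Fin.lt_def] at hij
  have := j.is_le
  refine ⟨(L.take j).drop i, ?_, ?_, ?_, ?_⟩
  · rw [← List.length_pos_iff, List.length_drop, List.length_take]
    omega
  · exact (List.drop_suffix _ _).isInfix.trans (List.take_prefix _ _).isInfix
  · rw [List.length_drop, List.length_take]
    omega
  · have h := (L.take j).prod_take_mul_prod_drop i
    rw [List.take_take, min_eq_left hij.le, hprod] at h
    exact mul_eq_left.1 h

lemma ShortProductsInto.coe_subgroup {G : Type*} [Group G] (H : Subgroup G) [Finite H] :
    ShortProductsInto (H : Set G) {1} (Nat.card H) (Nat.card H) := by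
  intro S hSH hS
  lift S to Multiset H using hSH
  obtain ⟨l, hl₀, hlS, hcard, hprod⟩ := exists_infix_length_le_prod_eq_one
    (L := S.toList) (by simpa using hS)
  refine ⟨l.map (↑), by simpa only [ne_eq, List.map_eq_nil_iff] using hl₀, ?_,
    by simpa only [List.length_map] using hcard, ?_⟩
  · rw [← Multiset.map_coe]
    refine Multiset.map_le_map ?_
    rw [← S.coe_toList]
    exact hlS.sublist.subperm
  · exact (map_list_prod H.subtype l).symm.trans (by rw [hprod, map_one])

end ShortProducts

section PowMulPow

/-- The element `x ^ a * y ^ b` with exponent pair `e = (a, b)`. Sequences over a product of two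
cyclic groups are handled through their exponent pairs, which need not be unique. -/
def powMulPow {M : Type*} [Monoid M] (x y : M) (e : ℕ × ℕ) : M := x ^ e.1 * y ^ e.2

lemma semiconjBy_pow_pow {M : Type*} [Monoid M] {x y : M} {r : ℕ}
    (h : SemiconjBy y x (x ^ r)) (b : ℕ) : SemiconjBy (y ^ b) x (x ^ r ^ b) := by
  induction b with
  | zero => simp
  | succ b ih => simpa only [pow_succ, pow_mul] using (ih.pow_right r).mul_left h

lemma exists_prod_map_powMulPow_eq {M : Type*} [Monoid M] {x y : M} {q r : ℕ}
    (h : SemiconjBy y x (x ^ r)) (hr : r ≡ 1 [MOD q]) (l : List (ℕ × ℕ)) :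
    ∃ a, a ≡ l.sum.1 [MOD q] ∧ (l.map (powMulPow x y)).prod = powMulPow x y (a, l.sum.2) := by
  induction l with
  | nil => exact ⟨0, .rfl, by simp [powMulPow]⟩
  | cons e l ih =>
    obtain ⟨a, ha, hprod⟩ := ih
    refine ⟨e.1 + r ^ e.2 * a, ?_, ?_⟩
    · simpa using ((hr.pow e.2).mul ha).add_left e.1
    · have hcomm : y ^ e.2 * x ^ a = x ^ (r ^ e.2 * a) * y ^ e.2 := by
        rw [pow_mul]
        exact ((semiconjBy_pow_pow h e.2).pow_right a).eq
      calc ((e :: l).map (powMulPow x y)).prod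
          = x ^ e.1 * (y ^ e.2 * x ^ a) * y ^ l.sum.2 := by
            simp only [List.map_cons, List.prod_cons, hprod, powMulPow, mul_assoc]
        _ = powMulPow x y (e.1 + r ^ e.2 * a, (e :: l).sum.2) := by
            simp only [hcomm, powMulPow, List.sum_cons, Prod.snd_add, pow_add, mul_assoc]

lemma shortProductsInto_powMulPow_pow {M : Type*} [Monoid M] {x y : M} {p r : ℕ} [Fact p.Prime]
    (h : SemiconjBy y x (x ^ r)) (hr : r ≡ 1 [MOD p]) :
    ShortProductsInto (Set.range (powMulPow x y)) (Set.range (powMulPow (x ^ p) (y ^ p)))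
      (3 * p - 2) p := by
  intro S hSA hS
  have : CanLift M (ℕ × ℕ) (powMulPow x y) (· ∈ Set.range (powMulPow x y)) := ⟨fun _ => id⟩
  lift S to Multiset (ℕ × ℕ) using hSA
  rw [Multiset.card_map] at hS
  let reduce : ℕ × ℕ →+ ZMod p × ZMod p :=
    (Nat.castAddMonoidHom (ZMod p)).prodMap (Nat.castAddMonoidHom (ZMod p))
  obtain ⟨T, hTS, hT₀, hTp, hT⟩ :=
    exists_le_card_le_sum_map_eq_zero (p := p) (by simp) reduce hS
  obtain ⟨l, rfl⟩ : ∃ l : List (ℕ × ℕ), ↑l = T := Quot.exists_rep T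
  rw [← map_multiset_sum, Multiset.sum_coe] at hT
  have hfst : p ∣ l.sum.1 := (ZMod.natCast_eq_zero_iff _ _).1 (congrArg Prod.fst hT)
  have hsnd : p ∣ l.sum.2 := (ZMod.natCast_eq_zero_iff _ _).1 (congrArg Prod.snd hT)
  obtain ⟨a, ha, hprod⟩ := exists_prod_map_powMulPow_eq h hr l
  obtain ⟨c, rfl⟩ : p ∣ a := (ha.dvd_iff dvd_rfl).2 hfst
  obtain ⟨d, hd⟩ := hsnd
  refine ⟨l.map (powMulPow x y), by simpa using hT₀, ?_, by simpa using hTp, (c, d), ?_⟩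
  · rw [← Multiset.map_coe]
    exact Multiset.map_le_map hTS
  · rw [hprod, hd, powMulPow, powMulPow, pow_mul, pow_mul]

lemma modEq_one_of_pow_modEq_one {p m r : ℕ} [Fact p.Prime] (hm₀ : m ≠ 0)
    (hm : m.Coprime (p - 1)) (hr : r ^ m ≡ 1 [MOD p]) : r ≡ 1 [MOD p] := by
  rw [← ZMod.natCast_eq_natCast_iff, Nat.cast_one] at hr ⊢
  rw [Nat.cast_pow] at hr
  have hr₀ : (r : ZMod p) ≠ 0 := by
    intro h
    rw [h, zero_pow hm₀] at hr
    exact zero_ne_one hr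
  simpa only [hm.gcd_eq_one, pow_one] using
    pow_gcd_eq_one.2 ⟨hr, ZMod.pow_card_sub_one_eq_one hr₀⟩

variable {G : Type*} [Group G] {x y : G}

-- The exponent `r` is determined only modulo the order of `x`; if `p` does not divide that order,
-- the Chinese remainder theorem lets us prescribe `r` modulo `p`.
lemma exists_semiconjBy_pow_modEq_one {m p : ℕ} [Fact p.Prime] (hm₀ : m ≠ 0)
    (hm : m.Coprime (p - 1)) (hx : IsOfFinOrder x) (hy : y ^ m = 1)
    (hxy : y * x * y⁻¹ ∈ Subgroup.zpowers x) :
    ∃ r, SemiconjBy y x (x ^ r) ∧ r ≡ 1 [MOD p] := by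
  obtain ⟨r, hr⟩ := hx.mem_powers_iff_mem_zpowers.2 hxy
  have hconj : SemiconjBy y x (x ^ r) := mul_inv_eq_iff_eq_mul.1 hr.symm
  by_cases hp : p ∣ orderOf x
  · have hrm : r ^ m ≡ 1 [MOD orderOf x] := by
      have h := semiconjBy_pow_pow hconj m
      rw [hy, SemiconjBy, one_mul, mul_one] at h
      rw [← pow_eq_pow_iff_modEq, ← h, pow_one]
    exact ⟨r, hconj, modEq_one_of_pow_modEq_one hm₀ hm (hrm.of_dvd hp)⟩
  · have hcop : (orderOf x).Coprime p :=
      ((Fact.out : p.Prime).coprime_iff_not_dvd.2 hp).symm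
    obtain ⟨s, hsr, hs⟩ := Nat.chineseRemainder hcop r 1
    exact ⟨s, by rwa [pow_eq_pow_iff_modEq.2 hsr], hs⟩

lemma shortProductsInto_powMulPow_one {n : ℕ} (hn : 0 < n) (hx : x ^ n = 1) :
    ShortProductsInto (Set.range (powMulPow x 1)) {1} n n := by
  have hfin : IsOfFinOrder x := isOfFinOrder_iff_pow_eq_one.2 ⟨n, hn, hx⟩
  have : Finite (Subgroup.zpowers x) := hfin.finite_zpowers
  have hcard : Nat.card (Subgroup.zpowers x) ≤ n := by
    rw [Nat.card_zpowers]
    exact orderOf_le_of_pow_eq_one hn hx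
  refine (ShortProductsInto.coe_subgroup (Subgroup.zpowers x)).mono ?_ hcard hcard
  rintro _ ⟨e, rfl⟩
  simp [powMulPow]

theorem shortProductsInto_powMulPow {m n : ℕ} (hm : 0 < m) (hn : 0 < n) (hx : x ^ (m * n) = 1)
    (hy : y ^ m = 1) (hxy : y * x * y⁻¹ ∈ Subgroup.zpowers x) :
    ShortProductsInto (Set.range (powMulPow x y)) {1} (2 * m + m * n - 2) (m * n) := by
  induction m using Nat.strong_induction_on generalizing x y with
  | _ m ih =>
    obtain rfl | hm₁ := eq_or_ne m 1
    · obtain rfl : y = 1 := by rwa [pow_one] at hy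
      simpa using shortProductsInto_powMulPow_one hn (by rwa [one_mul] at hx)
    obtain ⟨p, hpm⟩ : ∃ p, p = m.minFac := ⟨_, rfl⟩
    have hp : p.Prime := hpm ▸ Nat.minFac_prime hm₁
    have : Fact p.Prime := ⟨hp⟩
    have hp₂ := hp.two_le
    have hcop : m.Coprime (p - 1) :=
      Nat.coprime_of_lt_minFac (by omega) (by omega)
    have hfin : IsOfFinOrder x :=
      isOfFinOrder_iff_pow_eq_one.2 ⟨m * n, Nat.mul_pos hm hn, hx⟩
    obtain ⟨r, hconj, hr⟩ := exists_semiconjBy_pow_modEq_one hm.ne' hcop hfin hy hxy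
    obtain ⟨m', rfl⟩ : p ∣ m := hpm ▸ m.minFac_dvd
    have hm' : 0 < m' := Nat.pos_of_mul_pos_left hm
    have hconj' : y ^ p * x ^ p * (y ^ p)⁻¹ ∈ Subgroup.zpowers (x ^ p) := by
      rw [((semiconjBy_pow_pow hconj p).pow_right p).eq, mul_inv_cancel_right, pow_right_comm]
      exact Subgroup.npow_mem_zpowers _ _
    have hrec := ih m' (lt_mul_of_one_lt_left hm' hp.one_lt) hm'
      (by rwa [← pow_mul, ← mul_assoc]) (by rwa [← pow_mul]) hconj'
    obtain ⟨b, hb⟩ : ∃ b, 2 * m' + m' * n = b + 3 :=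
      Nat.exists_eq_add_of_le' (by have := Nat.mul_pos hm' hn; omega)
    rw [hb, show b + 3 - 2 = b + 1 by omega] at hrec
    refine ((shortProductsInto_powMulPow_pow hconj hr).trans hrec).mono subset_rfl ?_ ?_
    · have hpb : 2 * (p * m') + p * m' * n = p * b + 3 * p :=
        calc _ = p * (2 * m' + m' * n) := by ring
          _ = _ := by rw [hb]; ring
      omega
    · rw [mul_assoc]

end PowMulPow

theorem product_one_subseq_le_mn_general {G : Type*} [Group G] (m n : ℕ) (hm : 0 < m) (hn : 0 < n)
    (N H : Subgroup G) [N.Normal] [IsCyclic N] [IsCyclic H] (hN : Nat.card N ∣ m * n)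
    (hH : Nat.card H ∣ m) (hNH : N ⊔ H = ⊤) (S : Multiset G)
    (hS : 2 * m + m * n - 2 ≤ Multiset.card S) :
    ∃ T ≤ S, T ≠ 0 ∧ Multiset.card T ≤ m * n ∧ IsProductOne T := by
  obtain ⟨x, rfl⟩ := N.isCyclic_iff_exists_zpowers_eq_top.1 inferInstance
  obtain ⟨y, rfl⟩ := H.isCyclic_iff_exists_zpowers_eq_top.1 inferInstance
  rw [Nat.card_zpowers, orderOf_dvd_iff_pow_eq_one] at hN hH
  have hx : IsOfFinOrder x := isOfFinOrder_iff_pow_eq_one.2 ⟨m * n, Nat.mul_pos hm hn, hN⟩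
  have hy : IsOfFinOrder y := isOfFinOrder_iff_pow_eq_one.2 ⟨m, hm, hH⟩
  have hxy : y * x * y⁻¹ ∈ Subgroup.zpowers x :=
    Subgroup.Normal.conj_mem inferInstance x (Subgroup.mem_zpowers x) y
  have hrange (g : G) : g ∈ Set.range (powMulPow x y) := by
    obtain ⟨u, hu, v, hv, rfl⟩ :=
      Subgroup.mem_sup_of_normal_left.1 (hNH ▸ Subgroup.mem_top g)
    obtain ⟨a, rfl⟩ := hx.mem_powers_iff_mem_zpowers.2 hu
    obtain ⟨b, rfl⟩ := hy.mem_powers_iff_mem_zpowers.2 hv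
    exact ⟨(a, b), rfl⟩
  obtain ⟨l, hl₀, hlS, hl, hprod⟩ :=
    shortProductsInto_powMulPow hm hn hN hH hxy S (fun g _ => hrange g) hS
  exact ⟨l, hlS, by simpa using hl₀, hl, l, rfl, hprod⟩

section SemidirectProduct

open SemidirectProduct

variable {N H : Type*} [Group N] [Group H]

instance isCyclic_range [IsCyclic N] (f : N →* H) : IsCyclic f.range :=
  isCyclic_of_surjective f.rangeRestrict f.rangeRestrict_surjective

variable (φ : H →* MulAut N)

instance normal_range_inl : (inl (φ := φ)).range.Normal := by
  rw [range_inl_eq_ker_rightHom]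
  infer_instance

lemma range_inl_sup_range_inr : (inl (φ := φ)).range ⊔ (inr (φ := φ)).range = ⊤ :=
  eq_top_iff.2 fun g _ =>
    inl_left_mul_inr_right g ▸ Subgroup.mul_mem_sup ⟨g.left, rfl⟩ ⟨g.right, rfl⟩

lemma natCard_range_inl : Nat.card (inl (φ := φ)).range = Nat.card N :=
  Nat.card_range_of_injective inl_injective

lemma natCard_range_inr : Nat.card (inr (φ := φ)).range = Nat.card H :=
  Nat.card_range_of_injective inr_injective

end SemidirectProduct

/-- Every sequence of length `2m + mn − 2` over `C_m ⋉_φ C_{mn}` contains a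
nonempty product-one subsequence of length in `[1, mn]`. -/
theorem product_one_subseq_le_mn (m n : ℕ) (hm : 0 < m) (hn : 0 < n)
    (φ : Multiplicative (ZMod m) →* MulAut (Multiplicative (ZMod (m * n))))
    (S : Multiset (Multiplicative (ZMod (m * n)) ⋊[φ] Multiplicative (ZMod m)))
    (hS : Multiset.card S = 2 * m + m * n - 2) :
    ∃ T ≤ S, T ≠ 0 ∧ Multiset.card T ≤ m * n ∧ IsProductOne T := by
  exact product_one_subseq_le_mn_general m n hm hn _ _
    ((natCard_range_inl φ).trans (Nat.card_zmod _)).dvd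
    ((natCard_range_inr φ).trans (Nat.card_zmod _)).dvd (range_inl_sup_range_inr φ) S hS.ge
end
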